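/- arXiv:1806.00403 — 2 statements merged into one kernel-verified Lean document; each statement's English description precedes it below -/
import Mathlib

section
/- Fix an integer k ≥ 2 and a real t with t_c < t < 1, where t_c = (k−1)/(k+1). Then for every φ with 0 ≤ φ < φ_e(t) and every n ≥ 0, the n-fold iterate satisfies B̃_{φ,t,k}^n(φ) < π. In particular, for t_c < t < 1 the rooted Cayley tree with branching number k has no Lee–Yang zeros with argument in [0, φ_e(t)). -/
/-- The Blaschke product `B_{z,t,k}(w) = z·((w + t)/(1 + w·t))^k`. -/
noncomputable def Blaschke (z : ℂ) (t : ℝ) (k : ℕ) (w : ℂ) : ℂ :=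
  z * ((w + (t : ℂ)) / (1 + w * (t : ℂ))) ^ k

/-- The root with nonnegative imaginary part of the quadratic
`t·w² + ((k+1)·t² − (k−1))·w + t = 0` (for `t_c ≤ t < 1` the discriminant
`(k+1)²t⁴ − 2(k²+1)t² + (k−1)²` is `≤ 0`, so the root is
`(−b + i·√(−disc))/(2t)` with `b = (k+1)t² − (k−1)`). -/
noncomputable def wbullet (k : ℕ) (t : ℝ) : ℂ :=
  (-((((k : ℂ)) + 1) * (t : ℂ)^2 - ((k : ℂ) - 1)) +
    Complex.I * ((Real.sqrt (-(((k : ℝ) + 1)^2 * t^4 - 2 * ((k : ℝ)^2 + 1) * t^2 +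
      ((k : ℝ) - 1)^2)) : ℝ) : ℂ)) / (2 * (t : ℂ))

/-- The edge angle `φ_e(t) = Arg(w_•(t)·((1 + w_•(t)·t)/(w_•(t) + t))^k)`. -/
noncomputable def phie (k : ℕ) (t : ℝ) : ℝ :=
  (wbullet k t * ((1 + wbullet k t * (t : ℂ)) / (wbullet k t + (t : ℂ))) ^ k).arg

/-- `(z,t)` lies below the `φ_e` curve: either `0 ≤ t < t_c`, or
`t_c ≤ t < 1` and `φ_e(t) < |Arg z| ≤ π`. -/
def belowCurve (k : ℕ) (t : ℝ) (z : ℂ) : Prop :=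
  (0 ≤ t ∧ t < ((k : ℝ) - 1) / ((k : ℝ) + 1)) ∨
  (((k : ℝ) - 1) / ((k : ℝ) + 1) ≤ t ∧ t < 1 ∧ phie k t < |z.arg| ∧ |z.arg| ≤ Real.pi)

/-- The lift of the Blaschke product `B_{e^{iφ},t,k}` to `ℝ`:
`B̃_{φ,t,k}(θ) = k·θ − 2k·arctan(t·sin θ/(1 + t·cos θ)) + φ`. -/
noncomputable def Blift (φ t : ℝ) (k : ℕ) (θ : ℝ) : ℝ :=
  (k : ℝ) * θ - 2 * (k : ℝ) * Real.arctan (t * Real.sin θ / (1 + t * Real.cos θ)) + φ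

lemma den_pos {t : ℝ} (h0 : 0 < t) (h1 : t < 1) (θ : ℝ) : 0 < 1 + t * Real.cos θ := by
  nlinarith [Real.neg_one_le_cos θ]

lemma quad_pos {t : ℝ} (h0 : 0 < t) (h1 : t < 1) (θ : ℝ) :
    0 < 1 + 2 * t * Real.cos θ + t ^ 2 := by
  nlinarith [Real.neg_one_le_cos θ, mul_pos (sub_pos.2 h1) (sub_pos.2 h1)]

lemma hasDerivAt_Blift {t : ℝ} (h0 : 0 < t) (h1 : t < 1) (k : ℕ) (φ θ : ℝ) :
    HasDerivAt (Blift φ t k) (k * (1 - t ^ 2) / (1 + 2 * t * Real.cos θ + t ^ 2)) θ := by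
  have hu := den_pos h0 h1 θ
  have hq := quad_pos h0 h1 θ
  have h := (((hasDerivAt_id θ).const_mul (k : ℝ)).sub
    (((((Real.hasDerivAt_sin θ).const_mul t).div
      (((Real.hasDerivAt_cos θ).const_mul t).const_add 1) hu.ne').arctan).const_mul
        (2 * (k : ℝ)))).add_const φ
  refine HasDerivAt.congr_deriv (f := Blift φ t k) h ?_
  simp only [Pi.div_apply]
  have hs : Real.sin θ ^ 2 = 1 - Real.cos θ ^ 2 := Real.sin_sq θ
  have e : 1 + (t * Real.sin θ / (1 + t * Real.cos θ)) ^ 2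
      = (1 + 2 * t * Real.cos θ + t ^ 2) / (1 + t * Real.cos θ) ^ 2 := by
    field_simp
    rw [hs]; ring
  have e2 : (t * Real.cos θ * (1 + t * Real.cos θ) - t * Real.sin θ * (t * -Real.sin θ))
      = t * Real.cos θ + t ^ 2 := by
    linear_combination t ^ 2 * hs
  rw [e, e2]
  field_simp
  ring

lemma Blift_strictMono {t : ℝ} (h0 : 0 < t) (h1 : t < 1) (k : ℕ) (hk : 2 ≤ k) (φ : ℝ) :
    StrictMono (Blift φ t k) := by
  apply strictMono_of_deriv_pos
  intro x
  rw [(hasDerivAt_Blift h0 h1 k φ x).deriv]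
  have hk' : (0 : ℝ) < k := by positivity
  have : 0 < 1 - t ^ 2 := by nlinarith
  have := quad_pos h0 h1 x
  positivity

lemma exp_arctan_aux (u s : ℝ) (hu : 0 < u) :
    Complex.exp (((2 * Real.arctan (s / u) : ℝ) : ℂ) * Complex.I) * (u - s * Complex.I)
      = u + s * Complex.I := by
  set a := Real.arctan (s / u) with ha
  have hc : 0 < Real.cos a := Real.cos_arctan_pos _
  have ht : Real.sin a * u = s * Real.cos a := by
    have := Real.tan_arctan (s / u)
    rw [← ha, Real.tan_eq_sin_div_cos] at this
    field_simp at this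
    linarith
  have hsc := Real.sin_sq_add_cos_sq a
  rw [Complex.exp_mul_I, ← Complex.ofReal_cos, ← Complex.ofReal_sin, Real.cos_two_mul,
    Real.sin_two_mul]
  have h1 : (2 * Real.cos a ^ 2 - 1) * u + 2 * Real.sin a * Real.cos a * s = u := by
    have : Real.cos a * ((2 * Real.cos a ^ 2 - 1) * u + 2 * Real.sin a * Real.cos a * s)
      = Real.cos a * u := by
      linear_combination (-2 * Real.sin a * Real.cos a) * ht + (2 * u * Real.cos a) * hsc
    exact mul_left_cancel₀ hc.ne' this
  have h2 : 2 * Real.sin a * Real.cos a * u - (2 * Real.cos a ^ 2 - 1) * s = s := by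
    linear_combination (2 * Real.cos a) * ht
  generalize Real.cos a = C at *
  generalize Real.sin a = S at *
  apply Complex.ext
  · simp [pow_two] at *; linarith
  · simp [pow_two] at *; linarith

lemma stmt_core (k : ℕ) (hk : 2 ≤ k) (t : ℝ)
    (htc : ((k : ℝ) - 1) / ((k : ℝ) + 1) < t) (ht1 : t < 1) :
    ∃ θ0 : ℝ, 0 < θ0 ∧ θ0 < Real.pi ∧ phie k t = θ0 - Blift 0 t k θ0 := by
  have hk2 : (2 : ℝ) ≤ k := by exact_mod_cast hk
  have h0 : 0 < t := lt_trans (div_pos (by linarith) (by linarith)) htc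
  have htc' : (k : ℝ) - 1 < t * (k + 1) := (div_lt_iff₀ (by linarith)).1 htc
  obtain ⟨c, hc⟩ : ∃ c, c = ((k : ℝ) - 1 - (k + 1) * t ^ 2) / (2 * t) := ⟨_, rfl⟩
  have hc2 : 2 * t * c = (k : ℝ) - 1 - (k + 1) * t ^ 2 := by rw [hc]; field_simp
  have hc1 : c < 1 := by
    by_contra h
    nlinarith [mul_pos (sub_pos.2 htc') (by linarith : 0 < t + 1)]
  have hcm : -1 < c := by
    by_contra h
    nlinarith [mul_pos (sub_pos.2 ht1) (by nlinarith : 0 < (k : ℝ) - 1 + (k + 1) * t)]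
  obtain ⟨θ, hθ⟩ : ∃ θ, θ = Real.arccos c := ⟨_, rfl⟩
  have hcos : Real.cos θ = c := by rw [hθ, Real.cos_arccos hcm.le hc1.le]
  have hsin : Real.sin θ = √(1 - c ^ 2) := by rw [hθ, Real.sin_arccos]
  have hθ0 : 0 < θ := by rw [hθ]; exact Real.arccos_pos.2 hc1
  have hθπ : θ < Real.pi := by rw [hθ]; exact Real.arccos_lt_pi.2 hcm
  refine ⟨θ, hθ0, hθπ, ?_⟩
  have hw : wbullet k t = Complex.exp (θ * Complex.I) := by
    have hd : √(-(((k : ℝ) + 1)^2 * t^4 - 2 * ((k : ℝ)^2 + 1) * t^2 + ((k : ℝ) - 1)^2))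
        = 2 * t * Real.sin θ := by
      rw [hsin, ← Real.sqrt_sq (by positivity : 0 ≤ 2 * t), ← Real.sqrt_mul (by positivity)]
      congr 1
      linear_combination (2 * t * c + ((k : ℝ) - 1 - (k + 1) * t ^ 2)) * hc2
    unfold wbullet
    rw [hd, Complex.exp_mul_I, ← Complex.ofReal_cos, ← Complex.ofReal_sin, hcos]
    have ht0 : (t : ℂ) ≠ 0 := by exact_mod_cast h0.ne'
    have hc2' : 2 * (t : ℂ) * c = (k : ℂ) - 1 - (k + 1) * t ^ 2 := by exact_mod_cast hc2
    push_cast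
    field_simp
    linear_combination -hc2'
  have hB0 : Blift 0 t k 0 = 0 := by simp [Blift]
  have hBpos : 0 < Blift 0 t k θ := by
    have := Blift_strictMono h0 ht1 k hk 0 hθ0
    rwa [hB0] at this
  have hBle : Blift 0 t k θ ≤ θ := by
    have hm : MonotoneOn (fun x => x - Blift 0 t k x) (Set.Icc 0 θ) := by
      have hd : ∀ x, HasDerivAt (fun x => x - Blift 0 t k x)
        (1 - k * (1 - t ^ 2) / (1 + 2 * t * Real.cos x + t ^ 2)) x := fun x =>
          (hasDerivAt_id x).sub (hasDerivAt_Blift h0 ht1 k 0 x)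
      apply monotoneOn_of_deriv_nonneg (convex_Icc _ _)
      · exact fun x _ => (hd x).continuousAt.continuousWithinAt
      · exact fun x _ => (hd x).differentiableAt.differentiableWithinAt
      · intro x hx
        rw [interior_Icc] at hx
        rw [(hd x).deriv, sub_nonneg, div_le_one (quad_pos h0 ht1 x)]
        have := Real.cos_le_cos_of_nonneg_of_le_pi hx.1.le hθπ.le hx.2.le
        rw [hcos] at this
        nlinarith
    have := hm (Set.left_mem_Icc.2 hθ0.le) (Set.right_mem_Icc.2 hθ0.le) hθ0.le
    simp only [hB0] at this
    linarith
  have key : wbullet k t * ((1 + wbullet k t * (t : ℂ)) / (wbullet k t + (t : ℂ))) ^ k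
      = Complex.exp (((θ - Blift 0 t k θ : ℝ) : ℂ) * Complex.I) := by
    rw [hw]
    have hu := den_pos h0 ht1 θ
    have ha := exp_arctan_aux (1 + t * Real.cos θ) (t * Real.sin θ) hu
    set a := Real.arctan (t * Real.sin θ / (1 + t * Real.cos θ)) with hadef
    have e1 : 1 + Complex.exp (θ * Complex.I) * t
        = ((1 + t * Real.cos θ : ℝ) : ℂ) + ((t * Real.sin θ : ℝ) : ℂ) * Complex.I := by
      rw [Complex.exp_mul_I]; push_cast; ring
    have e2 : Complex.exp (θ * Complex.I) + t = Complex.exp (θ * Complex.I) *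
        (((1 + t * Real.cos θ : ℝ) : ℂ) - ((t * Real.sin θ : ℝ) : ℂ) * Complex.I) := by
      rw [Complex.exp_mul_I]; push_cast
      have := Complex.sin_sq_add_cos_sq (θ : ℂ)
      linear_combination (-(t : ℂ)) * this + (t : ℂ) * Complex.sin θ ^ 2 * Complex.I_sq
    have hne : (((1 + t * Real.cos θ : ℝ) : ℂ) - ((t * Real.sin θ : ℝ) : ℂ) * Complex.I) ≠ 0 := by
      intro h
      have := congrArg Complex.re h
      rw [Complex.sub_re, Complex.re_ofReal_mul, Complex.ofReal_re, Complex.I_re] at this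
      simp only [Complex.zero_re] at this
      linarith
    have e3 : (1 + Complex.exp (θ * Complex.I) * t) / (Complex.exp (θ * Complex.I) + t)
        = Complex.exp (((2 * a - θ : ℝ) : ℂ) * Complex.I) := by
      rw [e1, e2, ← ha, mul_div_mul_right _ _ hne, ← Complex.exp_sub]
      congr 1; push_cast; ring
    rw [e3, ← Complex.exp_nat_mul, ← Complex.exp_add]
    congr 1
    unfold Blift
    rw [← hadef]
    push_cast; ring
  unfold phie
  rw [key, Complex.exp_mul_I, Complex.arg_cos_add_sin_mul_I]
  constructor <;> linarith [Real.pi_pos]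

theorem stmt10 (k : ℕ) (hk : 2 ≤ k) (t : ℝ)
    (htc : ((k : ℝ) - 1) / ((k : ℝ) + 1) < t) (ht1 : t < 1)
    (φ : ℝ) (hφ0 : 0 ≤ φ) (hφe : φ < phie k t) (n : ℕ) :
    (Blift φ t k)^[n] φ < Real.pi := by
  obtain ⟨θ0, h0, hπ, he⟩ := stmt_core k hk t htc ht1
  have hk2 : (2 : ℝ) ≤ k := by exact_mod_cast hk
  have ht0 : 0 < t := lt_trans (div_pos (by linarith) (by linarith)) htc
  have hm := Blift_strictMono ht0 ht1 k hk φ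
  have hfix : Blift φ t k θ0 < θ0 := by
    have : Blift φ t k θ0 = Blift 0 t k θ0 + φ := by simp [Blift]
    linarith
  have hB0 : Blift φ t k 0 = φ := by simp [Blift]
  refine lt_trans ?_ hπ
  induction n with
  | zero =>
    have := hm h0
    simp only [Function.iterate_zero, id]
    linarith
  | succ n ih =>
    rw [Function.iterate_succ_apply']
    exact (hm ih).trans hfix
end

section
/- Fix an integer k ≥ 2 and a real t with t_c < t < 1, where t_c = (k−1)/(k+1). Then for every φ with 0 ≤ φ < φ_e(t) and every n ≥ 1, one has B̃_{φ,t,k+1}(B̃_{φ,t,k}^{n−1}(φ)) < π. In particular, for t_c < t < 1 the full (unrooted) Cayley tree with branching number k has no Lee–Yang zeros with argument in [0, φ_e(t)). -/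
lemma A_arctan (t : ℝ) (h0 : 0 < t) (h1 : t < 1) (y : ℝ) :
    2 * Real.arctan y - 2 * Real.arctan (t * Real.sin (2 * Real.arctan y) /
      (1 + t * Real.cos (2 * Real.arctan y))) = 2 * Real.arctan ((1 - t) / (1 + t) * y) := by
  set c := (1 - t) / (1 + t) with hc
  have hc0 : 0 < c := div_pos (by linarith) (by linarith)
  have hy : 0 < 1 + y ^ 2 := by positivity
  have hcos : Real.cos (2 * Real.arctan y) = (1 - y ^ 2) / (1 + y ^ 2) := by
    rw [Real.cos_two_mul, Real.cos_sq_arctan]; field_simp; ring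
  have hsin : Real.sin (2 * Real.arctan y) = 2 * y / (1 + y ^ 2) := by
    rw [Real.sin_two_mul, Real.sin_arctan, Real.cos_arctan]
    have := Real.sq_sqrt hy.le
    have h2 : 0 < Real.sqrt (1 + y ^ 2) := Real.sqrt_pos.2 hy
    field_simp
    rw [this]
  have hadd := Real.arctan_add (x := y) (y := -(c * y)) (by nlinarith [mul_nonneg hc0.le (sq_nonneg y)])
  rw [Real.arctan_neg] at hadd
  have hd : 0 < 1 + t + (1 - t) * y ^ 2 := by nlinarith [mul_nonneg (sub_pos.2 h1).le (sq_nonneg y)]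
  have harg : t * Real.sin (2 * Real.arctan y) / (1 + t * Real.cos (2 * Real.arctan y))
      = (y + -(c * y)) / (1 - y * -(c * y)) := by
    rw [hcos, hsin]
    have e1 : 1 + t * ((1 - y ^ 2) / (1 + y ^ 2)) = (1 + t + (1 - t) * y ^ 2) / (1 + y ^ 2) := by
      field_simp; ring
    have h1t : (1 + t) ≠ 0 := by linarith
    have e2 : 1 - y * -(c * y) = (1 + t + (1 - t) * y ^ 2) / (1 + t) := by
      rw [hc]; field_simp; ring
    have e3 : y + -(c * y) = 2 * t * y / (1 + t) := by
      rw [hc]; field_simp; ring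
    rw [e1, e2, e3]
    field_simp
  rw [harg, ← hadd]; ring

lemma exp_arctan (y : ℝ) :
    Complex.exp (((2 * Real.arctan y : ℝ) : ℂ) * Complex.I) * (1 - Complex.I * y)
      = 1 + Complex.I * y := by
  have hy : 0 < 1 + y ^ 2 := by positivity
  have hcos : Real.cos (2 * Real.arctan y) = (1 - y ^ 2) / (1 + y ^ 2) := by
    rw [Real.cos_two_mul, Real.cos_sq_arctan]; field_simp; ring
  have hsin : Real.sin (2 * Real.arctan y) = 2 * y / (1 + y ^ 2) := by
    rw [Real.sin_two_mul, Real.sin_arctan, Real.cos_arctan]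
    have := Real.sq_sqrt hy.le
    have h2 : 0 < Real.sqrt (1 + y ^ 2) := Real.sqrt_pos.2 hy
    field_simp
    rw [this]
  rw [Complex.exp_mul_I, ← Complex.ofReal_cos, ← Complex.ofReal_sin, hcos, hsin]
  apply Complex.ext
  · simp [-Complex.ofReal_div, -Complex.ofReal_mul, -Complex.ofReal_pow]
    field_simp; ring
  · simp [-Complex.ofReal_div, -Complex.ofReal_mul, -Complex.ofReal_pow]
    field_simp; ring

lemma one_sub_ne (y : ℝ) : (1 - Complex.I * y : ℂ) ≠ 0 := by
  intro h; have := congrArg Complex.re h; simp at this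

lemma one_add_ne (y : ℝ) : (1 + Complex.I * y : ℂ) ≠ 0 := by
  intro h; have := congrArg Complex.re h; simp at this

lemma arctan_ineq (k c x : ℝ) (hx : 0 ≤ x)
    (hkc : k * c * (1 + x ^ 2) = 1 + c ^ 2 * x ^ 2) (hk : c ^ 2 ≤ k * c) :
    k * Real.arctan (c * x) ≤ Real.arctan x := by
  have hd : ∀ y, HasDerivAt (fun y => Real.arctan y - k * Real.arctan (c * y))
      (1 / (1 + y ^ 2) - k * (1 / (1 + (c * y) ^ 2) * (c * 1))) y := fun y =>
    (Real.hasDerivAt_arctan y).sub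
      ((((hasDerivAt_id y).const_mul c).arctan).const_mul k)
  have hm : MonotoneOn (fun y => Real.arctan y - k * Real.arctan (c * y)) (Set.Icc 0 x) := by
    apply monotoneOn_of_deriv_nonneg (convex_Icc 0 x)
    · exact fun y _ => (hd y).continuousAt.continuousWithinAt
    · exact fun y _ => (hd y).differentiableAt.differentiableWithinAt
    · intro y hy
      rw [interior_Icc] at hy
      rw [(hd y).deriv]
      have hyx : y ^ 2 ≤ x ^ 2 := by nlinarith [hy.1, hy.2]
      have h1 : 0 < 1 + y ^ 2 := by positivity
      have h2 : 0 < 1 + (c * y) ^ 2 := by positivity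
      have : 1 / (1 + y ^ 2) - k * (1 / (1 + (c * y) ^ 2) * (c * 1))
        = ((1 + (c * y) ^ 2) - k * c * (1 + y ^ 2)) / ((1 + y ^ 2) * (1 + (c * y) ^ 2)) := by
        field_simp
      rw [this]
      apply div_nonneg _ (by positivity)
      nlinarith [mul_nonneg (sub_nonneg.2 hyx) (sub_nonneg.2 hk)]
  have := hm (Set.left_mem_Icc.2 hx) (Set.right_mem_Icc.2 hx) hx
  simp at this
  exact this

/-- The critical point and the value of `phie`. -/
lemma phie_eq (k : ℕ) (hk : 2 ≤ k) (t : ℝ) (h0 : 0 < t)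
    (htc : ((k : ℝ) - 1) / ((k : ℝ) + 1) < t) (ht1 : t < 1) :
    ∃ x : ℝ, 0 < x ∧ (1 - t) / (1 + t) * x ^ 2 < 1 ∧
      phie k t = 2 * Real.arctan x - k * (2 * Real.arctan ((1 - t) / (1 + t) * x)) := by
  have hk' : (2 : ℝ) ≤ k := by exact_mod_cast hk
  obtain ⟨p, hp⟩ : ∃ p, p = ((k : ℝ) + 1) * t - (k - 1) := ⟨_, rfl⟩
  obtain ⟨q, hq⟩ : ∃ q, q = ((k : ℝ) + 1) * t + (k - 1) := ⟨_, rfl⟩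
  have hp0 : 0 < p := by
    rw [div_lt_iff₀ (by linarith)] at htc; rw [hp]; linarith
  have hq0 : 0 < q := by rw [hq]; nlinarith
  have h1t : 0 < 1 - t := by linarith
  have h1t' : 0 < 1 + t := by linarith
  obtain ⟨x, hx0, hx2⟩ : ∃ x : ℝ, 0 < x ∧ x ^ 2 = p * (1 + t) / ((1 - t) * q) :=
    ⟨Real.sqrt (p * (1 + t) / ((1 - t) * q)), Real.sqrt_pos.2 (by positivity),
      Real.sq_sqrt (by positivity)⟩
  have hx1 : 1 + x ^ 2 = 4 * t / ((1 - t) * q) := by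
    rw [hx2]; field_simp; rw [hp, hq]; ring
  obtain ⟨c, hc⟩ : ∃ c, c = (1 - t) / (1 + t) := ⟨_, rfl⟩
  have hc0 : 0 < c := by rw [hc]; positivity
  have hc1 : c < 1 := by rw [hc, div_lt_one h1t']; linarith
  have hcx : c * x ^ 2 = p / q := by rw [hx2, hc]; field_simp
  refine ⟨x, hx0, ?_, ?_⟩
  · rw [← hc, hcx, div_lt_one hq0, hp, hq]; linarith
  rw [← hc]
  have hkey : (k : ℝ) * c * (1 + x ^ 2) = 1 + c ^ 2 * x ^ 2 := by
    have : c ^ 2 * x ^ 2 = c * (p / q) := by rw [← hcx]; ring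
    rw [this, hx1, hc]; field_simp; rw [hp, hq]; ring
  have hineq := arctan_ineq k c x hx0.le hkey (by nlinarith)
  have hw : wbullet k t * (1 - Complex.I * x) = 1 + Complex.I * x := by
    have hs : Real.sqrt (-(((k : ℝ) + 1)^2 * t^4 - 2 * ((k : ℝ)^2 + 1) * t^2 +
      ((k : ℝ) - 1)^2)) = (1 - t) * q * x := by
      rw [Real.sqrt_eq_iff_mul_self_eq_of_pos (by positivity)]
      have : (1 - t) * q * x * ((1 - t) * q * x) = (1 - t) ^ 2 * q ^ 2 * x ^ 2 := by ring
      rw [this, hx2]; field_simp; rw [hp, hq]; ring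
    have hb : (-(((k : ℝ) + 1) * t ^ 2 - (k - 1))) = 2 * t - (1 - t) * q * x ^ 2 := by
      rw [hx2]; field_simp; rw [hp]; ring
    have hx3 : (1 - t) * q * (1 + x ^ 2) = 4 * t := by rw [hx1]; field_simp
    have hb' : (-(((k : ℂ) + 1) * (t : ℂ) ^ 2 - ((k : ℂ) - 1))) =
      2 * t - (1 - t) * q * x ^ 2 := by exact_mod_cast congrArg (Complex.ofReal) hb
    have hx3' : (1 - t) * q * (1 + x ^ 2) = (4 * t : ℂ) := by
      exact_mod_cast congrArg (Complex.ofReal) hx3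
    have ht' : (t : ℂ) ≠ 0 := by exact_mod_cast h0.ne'
    unfold wbullet
    rw [hs, hb', div_mul_eq_mul_div, div_eq_iff (by simpa using ht')]
    push_cast
    linear_combination (-(1 - t) * q * x ^ 2 : ℂ) * Complex.I_sq + (Complex.I * x : ℂ) * hx3'
  have he := exp_arctan x
  have hwe : wbullet k t = Complex.exp (((2 * Real.arctan x : ℝ) : ℂ) * Complex.I) :=
    mul_right_cancel₀ (one_sub_ne x) (hw.trans he.symm)
  have hce := exp_arctan (c * x)
  have htc' : (c : ℂ) * (1 + t) = 1 - t := by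
    have : c * (1 + t) = 1 - t := by rw [hc]; field_simp
    exact_mod_cast congrArg Complex.ofReal this
  have hr1 : (wbullet k t + t) * (1 - Complex.I * x) = (1 + t) * (1 + Complex.I * (c * x : ℝ)) := by
    push_cast
    linear_combination hw - Complex.I * x * htc'
  have hr2 : (1 + wbullet k t * t) * (1 - Complex.I * x)
      = (1 + t) * (1 - Complex.I * (c * x : ℝ)) := by
    push_cast
    linear_combination t * hw + Complex.I * x * htc'
  have h1tc : (1 + t : ℂ) ≠ 0 := by exact_mod_cast h1t'.ne'
  have hne : wbullet k t + t ≠ 0 := by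
    intro h
    rw [h, zero_mul] at hr1
    exact mul_ne_zero h1tc (one_add_ne _) hr1.symm
  have hratio : (1 + wbullet k t * (t : ℂ)) / (wbullet k t + (t : ℂ)) =
      Complex.exp (-(((2 * Real.arctan (c * x) : ℝ) : ℂ) * Complex.I)) := by
    rw [div_eq_iff hne, Complex.exp_neg, inv_mul_eq_div, eq_div_iff (Complex.exp_ne_zero _)]
    apply mul_right_cancel₀ (one_sub_ne x)
    linear_combination Complex.exp (((2 * Real.arctan (c * x) : ℝ) : ℂ) * Complex.I) * hr2
      + (1 + t) * hce - hr1
  unfold phie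
  rw [hratio, hwe, ← Complex.exp_nat_mul, ← Complex.exp_add]
  have : ((2 * Real.arctan x : ℝ) : ℂ) * Complex.I +
      (k : ℂ) * (-(((2 * Real.arctan (c * x) : ℝ) : ℂ) * Complex.I)) =
      ((2 * Real.arctan x - k * (2 * Real.arctan (c * x)) : ℝ) : ℂ) * Complex.I := by
    push_cast; ring
  rw [this, Complex.arg_exp_mul_I, toIocMod_eq_self]
  have hpos : 0 < Real.arctan (c * x) := Real.arctan_pos.2 (by positivity)
  have := Real.arctan_lt_pi_div_two x
  have hpi := Real.pi_pos
  constructor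
  · nlinarith
  · nlinarith [mul_pos (by linarith : (0:ℝ) < k) hpos]

theorem stmt11 (k : ℕ) (hk : 2 ≤ k) (t : ℝ)
    (htc : ((k : ℝ) - 1) / ((k : ℝ) + 1) < t) (ht1 : t < 1)
    (φ : ℝ) (hφ0 : 0 ≤ φ) (hφe : φ < phie k t) (n : ℕ) (hn : 1 ≤ n) :
    Blift φ t (k + 1) ((Blift φ t k)^[n - 1] φ) < Real.pi := by
  have hk' : (2 : ℝ) ≤ k := by exact_mod_cast hk
  have h0 : 0 < t := lt_of_le_of_lt (div_nonneg (by linarith) (by linarith)) htc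
  obtain ⟨x, hx0, hx1, hphi⟩ := phie_eq k hk t h0 htc ht1
  set c := (1 - t) / (1 + t) with hc
  have hc0 : 0 < c := div_pos (by linarith) (by linarith)
  have hB : ∀ (m : ℕ) (y : ℝ), Blift φ t m (2 * Real.arctan y) =
      m * (2 * Real.arctan (c * y)) + φ := by
    intro m y
    rw [hc, ← A_arctan t h0 ht1 y]; unfold Blift; ring
  have hpar : ∀ θ : ℝ, 0 ≤ θ → θ ≤ 2 * Real.arctan x → ∃ y, 0 ≤ y ∧ y ≤ x ∧ θ = 2 * Real.arctan y := by
    intro θ h1 h2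
    have h3 := Real.arctan_lt_pi_div_two x
    have h4 : Real.arctan (Real.tan (θ / 2)) = θ / 2 :=
      Real.arctan_tan (by linarith [Real.pi_pos]) (by linarith)
    refine ⟨Real.tan (θ / 2), ?_, ?_, by rw [h4]; ring⟩
    · rw [← Real.arctan_nonneg, h4]; linarith
    · rw [← Real.arctan_strictMono.le_iff_le, h4]; linarith
  have hmono : ∀ (m : ℕ) (y : ℝ), y ≤ x → (m : ℝ) * (2 * Real.arctan (c * y)) ≤
      m * (2 * Real.arctan (c * x)) := by
    intro m y hy
    have : Real.arctan (c * y) ≤ Real.arctan (c * x) :=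
      Real.arctan_strictMono.monotone (mul_le_mul_of_nonneg_left hy hc0.le)
    gcongr
  have hnn : ∀ (m : ℕ) (y : ℝ), 0 ≤ y → 0 ≤ (m : ℝ) * (2 * Real.arctan (c * y)) := by
    intro m y hy
    have : 0 ≤ Real.arctan (c * y) := Real.arctan_nonneg.2 (by positivity)
    positivity
  have hit : ∀ j : ℕ, 0 ≤ (Blift φ t k)^[j] φ ∧ (Blift φ t k)^[j] φ ≤ 2 * Real.arctan x := by
    intro j
    induction j with
    | zero =>
      simp only [Function.iterate_zero, id]
      exact ⟨hφ0, by linarith [hnn k x hx0.le]⟩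
    | succ j ih =>
      rw [Function.iterate_succ_apply']
      obtain ⟨y, hy0, hyx, hy⟩ := hpar _ ih.1 ih.2
      rw [hy, hB]
      exact ⟨by linarith [hnn k y hy0], by linarith [hmono k y hyx]⟩
  obtain ⟨y, hy0, hyx, hy⟩ := hpar _ (hit (n - 1)).1 (hit (n - 1)).2
  rw [hy, hB]
  have h1 := hmono (k + 1) y hyx
  have h2 : Real.arctan (c * x) ≤ Real.arctan x⁻¹ := by
    apply Real.arctan_strictMono.monotone
    rw [le_inv_comm₀ (by positivity) hx0, ← one_div, le_div_iff₀ (by positivity)]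
    nlinarith
  rw [Real.arctan_inv_of_pos hx0] at h2
  push_cast at h1 ⊢
  linarith
end
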